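/- Suppose H : F → ℤ × ℤ is an injection of a set F onto the coset Λ_k = {(d,h) : 2d + h ≡ k (mod 4)}, where the group ℤ × ℤ acts freely and transitively on F via H (i.e., F is an affine space over ℤ² with H equivariant for translations (m,n) ↦ m·(0,4) + n·(-1,2)). Then for k ≢ 2 (mod 4) there is a unique φ ∈ F minimizing 2|d(φ)| + |h(φ)|, while for k ≡ 2 (mod 4) there are exactly four such minimizers. -/

import Mathlib

/-- Let `F` be a set with an injection `H : F → ℤ × ℤ` onto the affine lattice
`Λ_k = {(d,h) : 2d + h ≡ k (mod 4)}` (so that `F` is an affine space over `ℤ²`, with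
`H` equivariant for the translations `(m,n) ↦ m·(0,4) + n·(-1,2)`).  Then for
`k ≢ 2 (mod 4)` there is a unique `φ ∈ F` minimizing `2|d(φ)| + |h(φ)|`, while for
`k ≡ 2 (mod 4)` there are exactly four such minimizers. -/
theorem canonical_framings_count (F : Type*) (k : ℤ) (H : F → ℤ × ℤ)
    (hinj : Function.Injective H)
    (hrange : Set.range H = {p : ℤ × ℤ | (2 * p.1 + p.2) % 4 = k % 4})
    (act : (ℤ × ℤ) → F → F)
    (hact : ∀ (t : ℤ × ℤ) (φ : F),
      H (act t φ) = H φ + t.1 • ((0, 4) : ℤ × ℤ) + t.2 • ((-1, 2) : ℤ × ℤ))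
    (hfree : ∀ (t : ℤ × ℤ) (φ : F), act t φ = φ → t = 0)
    (htrans : ∀ φ ψ : F, ∃ t : ℤ × ℤ, act t φ = ψ) :
    (k % 4 ≠ 2 →
      ∃! φ : F, ∀ ψ : F,
        2 * |(H φ).1| + |(H φ).2| ≤ 2 * |(H ψ).1| + |(H ψ).2|) ∧
    (k % 4 = 2 →
      ∃ S : Finset F, S.card = 4 ∧
        ∀ φ : F, φ ∈ S ↔ ∀ ψ : F,
          2 * |(H φ).1| + |(H φ).2| ≤ 2 * |(H ψ).1| + |(H ψ).2|) := by
  have hmem : ∀ φ : F, (2 * (H φ).1 + (H φ).2) % 4 = k % 4 := by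
    intro φ
    have h : H φ ∈ Set.range H := ⟨φ, rfl⟩
    rw [hrange] at h
    exact h
  have hex : ∀ d h : ℤ, (2 * d + h) % 4 = k % 4 → ∃ φ : F, H φ = (d, h) := by
    intro d h hd
    have h' : ((d, h) : ℤ × ℤ) ∈ Set.range H := by
      rw [hrange]
      exact hd
    exact h'
  constructor
  · intro hk
    have key : ∃ c : ℤ, |c| ≤ 1 ∧ c % 4 = k % 4 := by
      have : k % 4 = 0 ∨ k % 4 = 1 ∨ k % 4 = 3 := by omega
      rcases this with h | h | h
      · exact ⟨0, by simp, by omega⟩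
      · exact ⟨1, by simp, by omega⟩
      · exact ⟨-1, by simp, by omega⟩
    obtain ⟨c, hc, hck⟩ := key
    obtain ⟨φ, hφ⟩ := hex 0 c (by omega)
    refine ⟨φ, ?_, ?_⟩
    · intro ψ
      have := hmem ψ
      rw [hφ]
      simp only [abs_zero]
      simp only [abs_eq_max_neg] at hc ⊢
      omega
    · intro ψ hψ
      have h1 := hψ φ
      have h2 := hmem ψ
      rw [hφ] at h1
      simp only [abs_zero] at h1
      simp only [abs_eq_max_neg] at hc h1
      apply hinj
      rw [hφ]
      ext <;> simp only <;> omega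
  · intro hk
    obtain ⟨a, ha⟩ := hex 1 0 (by omega)
    obtain ⟨b, hb⟩ := hex (-1) 0 (by omega)
    obtain ⟨c, hc⟩ := hex 0 2 (by omega)
    obtain ⟨e, he⟩ := hex 0 (-2) (by omega)
    classical
    refine ⟨{a, b, c, e}, ?_, ?_⟩
    · have ne : ∀ x y : F, H x ≠ H y → x ≠ y := fun x y h hxy => h (by rw [hxy])
      have hab := ne a b (by rw [ha, hb]; decide)
      have hac := ne a c (by rw [ha, hc]; decide)
      have hae := ne a e (by rw [ha, he]; decide)
      have hbc := ne b c (by rw [hb, hc]; decide)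
      have hbe := ne b e (by rw [hb, he]; decide)
      have hce := ne c e (by rw [hc, he]; decide)
      simp [hab, hac, hae, hbc, hbe, hce]
    · intro φ
      simp only [Finset.mem_insert, Finset.mem_singleton]
      constructor
      · intro h ψ
        have h2 := hmem ψ
        have h3 : 2 * |(H φ).1| + |(H φ).2| = 2 := by
          rcases h with h | h | h | h <;> subst h
          · rw [ha]; norm_num
          · rw [hb]; norm_num
          · rw [hc]; norm_num
          · rw [he]; norm_num
        rw [h3]
        simp only [abs_eq_max_neg]
        omega
      · intro h
        have h1 := h a
        have h2 := hmem φ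
        rw [ha] at h1
        simp only [abs_zero, abs_one] at h1
        simp only [abs_eq_max_neg] at h1
        have h4 : ((H φ).1 = 1 ∧ (H φ).2 = 0) ∨ ((H φ).1 = -1 ∧ (H φ).2 = 0) ∨
            ((H φ).1 = 0 ∧ (H φ).2 = 2) ∨ ((H φ).1 = 0 ∧ (H φ).2 = -2) := by omega
        rcases h4 with h | h | h | h
        · exact Or.inl (hinj (by rw [ha]; exact Prod.ext h.1 h.2))
        · exact Or.inr (Or.inl (hinj (by rw [hb]; exact Prod.ext h.1 h.2)))
        · exact Or.inr (Or.inr (Or.inl (hinj (by rw [hc]; exact Prod.ext h.1 h.2))))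
        · exact Or.inr (Or.inr (Or.inr (hinj (by rw [he]; exact Prod.ext h.1 h.2))))
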